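/- arXiv:2309.15713 — 8 statements merged into one kernel-verified Lean document; each statement's English description precedes it below -/
import Mathlib

section
/- Let B > 0, 0 < a < L, v0 < 0, and let v : ℝ → ℝ be continuous with v0 ≤ v(r) ≤ 0 for all r ≥ 0 and v(r) = 0 for all r ≥ a. Then S − (d(0,2L−a) + d(0,a)) = ∫_0^a [√(B²(2L−r)²/4 − v0) − √(B²r²/4 − v0)] dr ≥ 0; in particular S ≥ d(0,2L−a) + d(0,a). -/
open MeasureTheory Real

/-- `S - (d(0,2L-a) + d(0,a)) = ∫_0^a [√(B²(2L-r)²/4 - v0) - √(B²r²/4 - v0)] dr ≥ 0`,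
hence `S ≥ d(0,2L-a) + d(0,a)`. -/
theorem stmt_1 (B a L v0 : ℝ) (v : ℝ → ℝ)
    (hB : 0 < B) (ha : 0 < a) (haL : a < L) (hv0 : v0 < 0)
    (hv : Continuous v)
    (hvlb : ∀ r, 0 ≤ r → v0 ≤ v r) (hvub : ∀ r, 0 ≤ r → v r ≤ 0)
    (hvsupp : ∀ r, a ≤ r → v r = 0)
    (d : ℝ → ℝ → ℝ)
    (hd : ∀ r1 r2, d r1 r2 = ∫ r in r1..r2, Real.sqrt (B^2 * r^2 / 4 + v r - v0))
    (S : ℝ)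
    (hS : S = 2 * d 0 L + ∫ r in (0:ℝ)..L,
        (Real.sqrt (B^2 * (2*L - r)^2 / 4 - v0) - Real.sqrt (B^2 * r^2 / 4 - v0))) :
    S - (d 0 (2*L - a) + d 0 a) = (∫ r in (0:ℝ)..a,
        (Real.sqrt (B^2 * (2*L - r)^2 / 4 - v0) - Real.sqrt (B^2 * r^2 / 4 - v0)))
    ∧ 0 ≤ (∫ r in (0:ℝ)..a,
        (Real.sqrt (B^2 * (2*L - r)^2 / 4 - v0) - Real.sqrt (B^2 * r^2 / 4 - v0)))
    ∧ d 0 (2*L - a) + d 0 a ≤ S := by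
  have hf : Continuous (fun r : ℝ => Real.sqrt (B^2 * r^2 / 4 + v r - v0)) := by fun_prop
  have hg : Continuous (fun r : ℝ => Real.sqrt (B^2 * r^2 / 4 - v0)) := by fun_prop
  have hk : Continuous (fun r : ℝ => Real.sqrt (B^2 * (2*L - r)^2 / 4 - v0)) := by fun_prop
  have hfg : ∀ p q : ℝ, a ≤ p → p ≤ q →
      (∫ r in p..q, Real.sqrt (B^2 * r^2 / 4 - v0)) = d p q := by
    intro p q hp hpq
    rw [hd]
    apply intervalIntegral.integral_congr
    intro r hr
    rw [Set.uIcc_of_le hpq] at hr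
    simp [hvsupp r (hp.trans hr.1)]
  have hadd : ∀ p q s : ℝ, d p q + d q s = d p s := by
    intro p q s
    rw [hd, hd, hd]
    exact intervalIntegral.integral_add_adjacent_intervals
      (hf.intervalIntegrable _ _) (hf.intervalIntegrable _ _)
  have hsub : (∫ r in a..L, Real.sqrt (B^2 * (2*L - r)^2 / 4 - v0)) = d L (2*L - a) := by
    rw [intervalIntegral.integral_comp_sub_left
      (fun r : ℝ => Real.sqrt (B^2 * r^2 / 4 - v0)) (2*L), ← hfg L (2*L-a) haL.le (by linarith)]
    congr 1
    ring
  have hsplit := intervalIntegral.integral_add_adjacent_intervals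
    ((hk.sub hg).intervalIntegrable (μ := volume) 0 a) ((hk.sub hg).intervalIntegrable a L)
  have htail := intervalIntegral.integral_sub
    (hk.intervalIntegrable (μ := volume) a L) (hg.intervalIntegrable a L)
  rw [hsub, hfg a L le_rfl haL.le] at htail
  have h1 := hadd 0 L (2*L - a)
  have h2 := hadd 0 a L
  have heq : S - (d 0 (2*L - a) + d 0 a) = (∫ r in (0:ℝ)..a,
        (Real.sqrt (B^2 * (2*L - r)^2 / 4 - v0) - Real.sqrt (B^2 * r^2 / 4 - v0))) := by
    simp only [Pi.sub_apply] at hsplit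
    linarith
  have hnn : 0 ≤ (∫ r in (0:ℝ)..a,
        (Real.sqrt (B^2 * (2*L - r)^2 / 4 - v0) - Real.sqrt (B^2 * r^2 / 4 - v0))) := by
    apply intervalIntegral.integral_nonneg ha.le
    intro r hr
    obtain ⟨h0, h3⟩ := hr
    have h4 : r ≤ 2*L - r := by linarith
    rw [sub_nonneg]
    gcongr
  exact ⟨heq, hnn, by linarith⟩
end

section
/- Let B > 0, 0 < a < L, v0 < 0, and let v : ℝ → ℝ be continuous with v0 ≤ v(r) ≤ 0 for all r ≥ 0 and v(r) = 0 for all r ≥ a. Then B·L² − B·L·a ≤ S ≤ B·L² + 2√(−v0)·L + γ0, where γ0 = ∫_0^a √(v(r) − v0) dr. -/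
open MeasureTheory Real

/-- `B L² - B L a ≤ S ≤ B L² + 2√(-v0) L + γ0` where
`γ0 = ∫_0^a √(v(r) - v0) dr`. -/
theorem stmt_2 (B a L v0 : ℝ) (v : ℝ → ℝ)
    (hB : 0 < B) (ha : 0 < a) (haL : a < L) (hv0 : v0 < 0)
    (hv : Continuous v)
    (hvlb : ∀ r, 0 ≤ r → v0 ≤ v r) (hvub : ∀ r, 0 ≤ r → v r ≤ 0)
    (hvsupp : ∀ r, a ≤ r → v r = 0)
    (d : ℝ → ℝ → ℝ)
    (hd : ∀ r1 r2, d r1 r2 = ∫ r in r1..r2, Real.sqrt (B^2 * r^2 / 4 + v r - v0))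
    (S : ℝ)
    (hS : S = 2 * d 0 L + ∫ r in (0:ℝ)..L,
        (Real.sqrt (B^2 * (2*L - r)^2 / 4 - v0) - Real.sqrt (B^2 * r^2 / 4 - v0)))
    (γ0 : ℝ)
    (hγ0 : γ0 = ∫ r in (0:ℝ)..a, Real.sqrt (v r - v0)) :
    B * L^2 - B * L * a ≤ S ∧ S ≤ B * L^2 + 2 * Real.sqrt (-v0) * L + γ0 := by
  have hL : 0 < L := ha.trans haL
  set s := Real.sqrt (-v0) with hs
  have hs0 : 0 ≤ s := Real.sqrt_nonneg _
  have key : ∀ x y : ℝ, 0 ≤ x → 0 ≤ y →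
      Real.sqrt (B^2 * x^2 / 4 + y) ≤ B * x / 2 + Real.sqrt y := by
    intro x y hx hy
    have h1 : 0 ≤ B * x := mul_nonneg hB.le hx
    have h2 := Real.sqrt_nonneg y
    apply Real.sqrt_le_iff.mpr
    refine ⟨by positivity, ?_⟩
    nlinarith [Real.sq_sqrt hy, mul_nonneg h1 h2]
  have keyl : ∀ x : ℝ, 0 ≤ x → B * x / 2 ≤ Real.sqrt (B^2 * x^2 / 4 - v0) := by
    intro x hx
    apply Real.le_sqrt_of_sq_le
    nlinarith
  let F : ℝ → ℝ := fun r => 2 * Real.sqrt (B^2 * r^2 / 4 + v r - v0) +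
    (Real.sqrt (B^2 * (2*L - r)^2 / 4 - v0) - Real.sqrt (B^2 * r^2 / 4 - v0))
  have hFc : Continuous F := by fun_prop
  have hSF : S = (∫ r in (0:ℝ)..a, F r) + ∫ r in a..L, F r := by
    rw [intervalIntegral.integral_add_adjacent_intervals (hFc.intervalIntegrable _ _)
      (hFc.intervalIntegrable _ _), hS, hd, ← intervalIntegral.integral_const_mul,
      ← intervalIntegral.integral_add]
    · exact Continuous.intervalIntegrable (by fun_prop) _ _
    · exact Continuous.intervalIntegrable (by fun_prop) _ _
  have l1 : 0 ≤ ∫ r in (0:ℝ)..a, F r := by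
    apply intervalIntegral.integral_nonneg ha.le
    rintro r ⟨h0, h1⟩
    have h2 : Real.sqrt (B^2 * r^2 / 4 - v0) ≤ Real.sqrt (B^2 * (2*L - r)^2 / 4 - v0) := by
      apply Real.sqrt_le_sqrt
      have : r^2 ≤ (2*L-r)^2 := by nlinarith
      have := mul_le_mul_of_nonneg_left this (sq_nonneg B)
      linarith
    have h3 := Real.sqrt_nonneg (B^2 * r^2 / 4 + v r - v0)
    simp only [F]
    linarith
  have eqF : ∀ r, a ≤ r → F r = Real.sqrt (B^2 * r^2 / 4 - v0) +
      Real.sqrt (B^2 * (2*L - r)^2 / 4 - v0) := by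
    intro r hr
    simp only [F, hvsupp r hr, add_zero]
    ring
  have l2 : B * L * (L - a) ≤ ∫ r in a..L, F r := by
    have : ∫ r in a..L, (B * L) = B * L * (L - a) := by
      rw [intervalIntegral.integral_const, smul_eq_mul]; ring
    rw [← this]
    apply intervalIntegral.integral_mono_on haL.le (by simp) (hFc.intervalIntegrable _ _)
    rintro r ⟨h0, h1⟩
    rw [eqF r h0]
    have h2 := keyl r (by linarith)
    have h3 := keyl (2*L-r) (by linarith)
    linarith
  have u1 : ∫ r in (0:ℝ)..a, F r ≤ (B * L + s) * a + γ0 := by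
    have : ∫ r in (0:ℝ)..a, ((B * L + s) + Real.sqrt (v r - v0)) = (B * L + s) * a + γ0 := by
      rw [intervalIntegral.integral_add (by simp)
        (Continuous.intervalIntegrable (by fun_prop) _ _),
        intervalIntegral.integral_const, smul_eq_mul, hγ0]
      ring
    rw [← this]
    apply intervalIntegral.integral_mono_on ha.le (hFc.intervalIntegrable _ _)
      (Continuous.intervalIntegrable (by fun_prop) _ _)
    rintro r ⟨h0, h1⟩
    have h2 := key r (v r - v0) h0 (by linarith [hvlb r h0])
    have h3 := key (2*L-r) (-v0) (by linarith) (by linarith)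
    have h4 : Real.sqrt (B^2 * r^2 / 4 + v r - v0) ≤ Real.sqrt (B^2 * r^2 / 4 - v0) :=
      Real.sqrt_le_sqrt (by linarith [hvub r h0])
    rw [← add_sub_assoc] at h2
    rw [← sub_eq_add_neg] at h3
    simp only [F]
    linarith
  have u2 : ∫ r in a..L, F r ≤ (B * L + 2 * s) * (L - a) := by
    have : ∫ r in a..L, (B * L + 2 * s) = (B * L + 2 * s) * (L - a) := by
      rw [intervalIntegral.integral_const, smul_eq_mul]; ring
    rw [← this]
    apply intervalIntegral.integral_mono_on haL.le (hFc.intervalIntegrable _ _) (by simp)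
    rintro r ⟨h0, h1⟩
    rw [eqF r h0]
    have h2 := key r (-v0) (by linarith) (by linarith)
    have h3 := key (2*L-r) (-v0) (by linarith) (by linarith)
    rw [← sub_eq_add_neg] at h2 h3
    linarith
  have hsa := mul_nonneg hs0 ha.le
  constructor <;> nlinarith
end

section
/- Let B > 0, v0 < 0, a > 0, L > (1 + √3/2)·a, and let v : ℝ → ℝ be continuous with v0 ≤ v(r) ≤ 0 for all r ≥ 0 and v(r) = 0 for all r ≥ a. Then d(2L−a, 2L) < d̃(2L−a), and consequently S < 2 d(0, 2L−a). -/
open MeasureTheory Real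

/-- if `L > (1 + √3/2)·a`, then `d(2L-a, 2L) < d̃(2L-a)` and
consequently `S < 2 d(0, 2L-a)`. -/
theorem stmt_6 (B a L v0 : ℝ) (v : ℝ → ℝ)
    (hB : 0 < B) (hv0 : v0 < 0) (ha : 0 < a)
    (hL : (1 + Real.sqrt 3 / 2) * a < L)
    (hv : Continuous v)
    (hvlb : ∀ r, 0 ≤ r → v0 ≤ v r) (hvub : ∀ r, 0 ≤ r → v r ≤ 0)
    (hvsupp : ∀ r, a ≤ r → v r = 0)
    (d : ℝ → ℝ → ℝ)
    (hd : ∀ r1 r2, d r1 r2 = ∫ r in r1..r2, Real.sqrt (B^2 * r^2 / 4 + v r - v0))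
    (dfree : ℝ → ℝ)
    (hdfree : ∀ R, dfree R = ∫ r in (0:ℝ)..R, Real.sqrt (B^2 * r^2 / 4 - v0))
    (S : ℝ)
    (hS : S = 2 * d 0 L + ∫ r in (0:ℝ)..L,
        (Real.sqrt (B^2 * (2*L - r)^2 / 4 - v0) - Real.sqrt (B^2 * r^2 / 4 - v0))) :
    d (2*L - a) (2*L) < dfree (2*L - a) ∧ S < 2 * d 0 (2*L - a) := by
  have h3 : (1.7:ℝ) < Real.sqrt 3 := by
    rw [Real.lt_sqrt (by norm_num)]; norm_num
  have hLa : 1.85 * a < L := by nlinarith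
  set f : ℝ → ℝ := fun r => Real.sqrt (B^2 * r^2 / 4 - v0) with hf
  have hfc : Continuous f := by rw [hf]; fun_prop
  have hfi : ∀ x y, IntervalIntegrable f volume x y := fun x y => hfc.intervalIntegrable x y
  have hgc : Continuous (fun r => Real.sqrt (B^2 * r^2 / 4 + v r - v0)) := by fun_prop
  have hfpos : ∀ x, 0 < f x := fun x => Real.sqrt_pos.mpr (by nlinarith [sq_nonneg (B * x)])
  set R := 2 * L - a with hR
  have hRa : 2.7 * a < R := by linarith
  have hR0 : 0 < R := by linarith
  have hFpos : 0 < ∫ r in (0:ℝ)..R, f r :=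
    intervalIntegral.intervalIntegral_pos_of_pos (hfi _ _) hfpos hR0
  have key : ∫ r in (0:ℝ)..(2*L), f r < 2 * ∫ r in (0:ℝ)..R, f r := by
    obtain ⟨k, hk⟩ : ∃ k, k = 2 * L / R := ⟨_, rfl⟩
    have hkR : k * R = 2 * L := by rw [hk]; field_simp
    have hk1 : 1 ≤ k := by rw [hk, le_div_iff₀ hR0]; linarith
    have hk2 : k < 1.4 := by rw [hk, div_lt_iff₀ hR0]; linarith
    have e := intervalIntegral.mul_integral_comp_mul_left (f := f) (a := 0) (b := R) k
    rw [mul_zero, hkR] at e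
    have hle : ∫ r in (0:ℝ)..R, f (k * r) ≤ ∫ r in (0:ℝ)..R, k * f r := by
      apply intervalIntegral.integral_mono_on hR0.le
      · exact (hfc.comp (by fun_prop)).intervalIntegrable _ _
      · exact (hfc.const_mul k).intervalIntegrable _ _
      · intro x _
        have h2 : k * f x = Real.sqrt (k^2 * (B^2 * x^2 / 4 - v0)) := by
          rw [Real.sqrt_mul (by positivity), Real.sqrt_sq (by linarith)]
        rw [h2]
        apply Real.sqrt_le_sqrt
        nlinarith [mul_nonneg (by nlinarith : (0:ℝ) ≤ k^2 - 1) (by linarith : 0 ≤ -v0)]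
    rw [intervalIntegral.integral_const_mul] at hle
    rw [← e]
    have h5 : k * ∫ r in (0:ℝ)..R, f (k * r) ≤ k * (k * ∫ r in (0:ℝ)..R, f r) :=
      mul_le_mul_of_nonneg_left hle (by linarith)
    have h6 : k * k < 2 := by nlinarith
    nlinarith
  have hdf : ∀ x y, a ≤ x → x ≤ y → d x y = ∫ r in x..y, f r := by
    intro x y hx hxy
    rw [hd]
    apply intervalIntegral.integral_congr
    intro r hr
    rw [Set.uIcc_of_le hxy] at hr
    simp only [hf]
    rw [hvsupp r (hx.trans hr.1), add_zero]
  have a1 := intervalIntegral.integral_add_adjacent_intervals (hfi 0 R) (hfi R (2*L))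
  have a2 := intervalIntegral.integral_add_adjacent_intervals (hfi 0 L) (hfi L (2*L))
  have a3 := intervalIntegral.integral_add_adjacent_intervals (hfi 0 L) (hfi L R)
  constructor
  · rw [hdf _ _ (by linarith) (by linarith), hdfree]
    linarith
  · have a4 : d 0 L + d L R = d 0 R := by
      rw [hd, hd, hd]
      exact intervalIntegral.integral_add_adjacent_intervals
        (hgc.intervalIntegrable _ _) (hgc.intervalIntegrable _ _)
    have a5 := hdf L R (by linarith) (by linarith)
    have a6 : (∫ r in (0:ℝ)..L,
        (Real.sqrt (B^2 * (2*L - r)^2 / 4 - v0) - Real.sqrt (B^2 * r^2 / 4 - v0)))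
        = (∫ r in L..(2*L), f r) - ∫ r in (0:ℝ)..L, f r := by
      have a7 : ∫ r in (0:ℝ)..L, f (2*L - r) = ∫ r in L..(2*L), f r := by
        rw [intervalIntegral.integral_comp_sub_left (fun x => f x) (2*L)]
        congr 1 <;> ring
      rw [← a7]
      exact intervalIntegral.integral_sub
        ((hfc.comp (by fun_prop)).intervalIntegrable _ _) (hfi _ _)
    rw [hS, a6]
    linarith
end

section
/- Let B > 0, L > 0, v0 < 0, f(t) = (B·L²/4)·(1+2t) + ((−v0)/(2B))·log((1+t)/t), and t_L = (1/2)·(−1 + √(1 + 4(−v0)/(B²L²))). Then f(t_L) = ∫_0^L √(B²r²/4 − v0) dr. -/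
open MeasureTheory Real

/-- `f(t_L) = ∫_0^L √(B²r²/4 - v0) dr`. -/
theorem stmt_8 (B L v0 : ℝ) (hB : 0 < B) (hL : 0 < L) (hv0 : v0 < 0)
    (f : ℝ → ℝ)
    (hf : ∀ t, 0 < t → f t = B * L^2 / 4 * (1 + 2*t) + (-v0) / (2*B) * Real.log ((1+t)/t))
    (tL : ℝ)
    (htL : tL = 1/2 * (-1 + Real.sqrt (1 + 4 * (-v0) / (B^2 * L^2)))) :
    f tL = ∫ r in (0:ℝ)..L, Real.sqrt (B^2 * r^2 / 4 - v0) := by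
  have hq : ∀ r : ℝ, 0 < B^2 * r^2 / 4 - v0 := fun r => by
    have : 0 ≤ B^2 * r^2 / 4 := by positivity
    linarith
  have hS : ∀ r : ℝ, 0 < √(B^2 * r^2 / 4 - v0) := fun r => Real.sqrt_pos.2 (hq r)
  have hSS : ∀ r : ℝ, √(B^2 * r^2 / 4 - v0) ^ 2 = B^2 * r^2 / 4 - v0 :=
    fun r => Real.sq_sqrt (hq r).le
  have hP : ∀ r : ℝ, 0 < B * r / 2 + √(B^2 * r^2 / 4 - v0) := fun r => by
    have h : |B * r / 2| < √(B^2 * r^2 / 4 - v0) := by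
      refine abs_lt_of_sq_lt_sq ?_ (hS r).le
      rw [hSS]; nlinarith
    linarith [(abs_lt.1 h).1]
  have hder : ∀ r : ℝ, HasDerivAt (fun r : ℝ => r * √(B^2 * r^2 / 4 - v0) / 2
      + (-v0) / B * Real.log (B * r / 2 + √(B^2 * r^2 / 4 - v0))) (√(B^2 * r^2 / 4 - v0)) r := by
    intro r
    have h0 : HasDerivAt (fun r : ℝ => B^2 * r^2 / 4 - v0) (B^2 * r / 2) r := by
      have := ((((hasDerivAt_id r).pow 2).const_mul (B^2)).div_const 4).sub_const v0
      refine this.congr_deriv ?_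
      simp; ring
    have h1 := h0.sqrt (hq r).ne'
    have h2 : HasDerivAt (fun r : ℝ => B * r / 2) (B / 2) r := by
      simpa using ((hasDerivAt_id r).const_mul B).div_const 2
    have h3 := (h2.add h1).log (hP r).ne'
    have h4 := (((hasDerivAt_id r).mul h1).div_const 2).add (h3.const_mul ((-v0)/B))
    refine h4.congr_deriv ?_
    simp only [Pi.add_apply, id]
    have e1 := hSS r
    have e2 := hS r
    have e3 := hP r
    generalize √(B^2 * r^2 / 4 - v0) = S at *
    have e4 : (B / 2 + B ^ 2 * r / 2 / (2 * S)) / (B * r / 2 + S) = B / (2 * S) := by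
      rw [div_eq_iff e3.ne']; field_simp; ring
    rw [e4]
    field_simp
    nlinarith
  have hInteg : IntervalIntegrable (fun r : ℝ => √(B^2 * r^2 / 4 - v0)) volume 0 L := by
    apply Continuous.intervalIntegrable
    fun_prop
  rw [intervalIntegral.integral_eq_sub_of_hasDerivAt (fun r _ => hder r) hInteg]
  have hs : √(1 + 4 * (-v0) / (B^2 * L^2)) = 2 * √(B^2 * L^2 / 4 - v0) / (B * L) := by
    rw [Real.sqrt_eq_iff_mul_self_eq_of_pos (by have := hS L; positivity)]
    have := hSS L
    generalize √(B^2 * L^2 / 4 - v0) = S at *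
    field_simp
    rw [this]; ring
  rw [hs] at htL
  have e1 := hSS L
  have e2 := hS L
  have e3 := hP L
  have e0 : √(B^2 * 0^2 / 4 - v0) = √(-v0) := by congr 1; ring
  rw [e0]
  generalize √(B^2 * L^2 / 4 - v0) = S at *
  have hBL : 0 < B * L := by positivity
  have hm : 0 < S - B * L / 2 := by nlinarith
  have ht : tL = (S - B * L / 2) / (B * L) := by rw [htL]; field_simp; ring
  have ht0 : 0 < tL := by rw [ht]; positivity
  have hr : (1 + tL) / tL = (B * L / 2 + S)^2 / (-v0) := by
    have : -v0 ≠ 0 := by linarith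
    rw [div_eq_div_iff ht0.ne' this, ht]
    have hv : -v0 = (S - B * L / 2) * (B * L / 2 + S) := by linarith
    rw [hv]; field_simp; ring
  rw [hf tL ht0, hr, Real.log_div (by positivity) (by linarith), Real.log_pow, ht]
  have : Real.log (B * 0 / 2 + √(-v0)) = Real.log (-v0) / 2 := by
    rw [← Real.log_sqrt (by linarith)]; simp
  rw [this]
  push_cast
  field_simp
  ring
end

section
/- Let B > 0, L > 0, v0 < 0, ν ∈ ℝ, f(t) = (B·L²/4)·(1+2t) + ((−v0)/(2B))·log((1+t)/t), and t_L = (1/2)·(−1 + √(1 + 4(−v0)/(B²L²))). Then, as h → 0⁺, ∫_0^∞ e^{−f(t)/h} t^{ν−1} (1+t)^{−ν} dt = √(2πh/f''(t_L)) · e^{−f(t_L)/h} · t_L^{ν−1} (1+t_L)^{−ν} · (1 + o(1)); i.e. the ratio of the left-hand side to √(2πh/f''(t_L)) · e^{−f(t_L)/h} · t_L^{ν−1} (1+t_L)^{−ν} tends to 1 as h → 0⁺. -/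
open MeasureTheory Real Filter Topology

lemma quad_limit (φ φ' : ℝ → ℝ) (x0 k : ℝ) (hd : ∀ x, HasDerivAt φ (φ' x) x)
    (h0 : φ' x0 = 0) (h2 : HasDerivAt φ' k x0) :
    Tendsto (fun u => (φ (x0 + u) - φ x0) / u ^ 2) (𝓝[≠] 0) (𝓝 (k / 2)) := by
  have e1 : ∀ u, HasDerivAt (fun u => φ (x0 + u) - φ x0) (φ' (x0 + u)) u := by
    intro u
    exact ((hd (x0 + u)).comp_const_add x0 u).sub_const _
  refine HasDerivAt.lhopital_zero_nhdsNE (f' := fun u => φ' (x0 + u)) (g' := fun u => 2 * u)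
    (Eventually.of_forall e1) (Eventually.of_forall fun u => ?_) ?_ ?_ ?_ ?_
  · simpa using hasDerivAt_pow 2 u
  · filter_upwards [self_mem_nhdsWithin] with u hu
    simpa using hu
  · have := (e1 0).continuousAt.tendsto
    simp only [add_zero, sub_self] at this
    exact this.mono_left nhdsWithin_le_nhds
  · have : Continuous (fun u : ℝ => u ^ 2) := by fun_prop
    have := this.tendsto 0
    simp only [ne_eq, OfNat.ofNat_ne_zero, not_false_eq_true, zero_pow] at this
    exact this.mono_left nhdsWithin_le_nhds
  · have := (hasDerivAt_iff_tendsto_slope_zero.1 h2).div_const 2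
    refine this.congr fun u => ?_
    rw [h0, smul_eq_mul, sub_zero, div_eq_mul_inv, div_eq_mul_inv, mul_inv]
    ring

lemma lower_bound (φ φ' : ℝ → ℝ) (x0 k : ℝ) (hk : 0 < k) (hd : ∀ x, HasDerivAt φ (φ' x) x)
    (h0 : φ' x0 = 0) (h2 : HasDerivAt φ' k x0) (hm : Monotone φ') :
    ∃ δ > 0, ∀ u, δ * min (u ^ 2) |u| ≤ φ (x0 + u) - φ x0 := by
  have hl := quad_limit φ φ' x0 k hd h0 h2
  have hev := hl.eventually (lt_mem_nhds (show k / 4 < k / 2 by linarith))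
  rw [eventually_nhdsWithin_iff, Metric.eventually_nhds_iff] at hev
  obtain ⟨ε, hε, hev⟩ := hev
  have hconv : ConvexOn ℝ Set.univ φ := by
    apply MonotoneOn.convexOn_of_deriv convex_univ
    · exact fun x _ => (hd x).continuousAt.continuousWithinAt
    · exact fun x _ => (hd x).differentiableAt.differentiableWithinAt
    · have : deriv φ = φ' := funext fun x => (hd x).deriv
      rw [this]
      exact hm.monotoneOn _
  obtain ⟨r, hr0, hr1, hrε⟩ : ∃ r > 0, r ≤ 1 ∧ r < ε :=
    ⟨min 1 (ε / 2), by positivity, min_le_left _ _, (min_le_right _ _).trans_lt (by linarith)⟩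
  have hloc : ∀ u, |u| ≤ r → k / 4 * u ^ 2 ≤ φ (x0 + u) - φ x0 := by
    intro u hu
    rcases eq_or_ne u 0 with rfl | hne
    · simp
    · have := hev (y := u) (by simpa using hu.trans_lt hrε) hne
      rw [lt_div_iff₀ (by positivity)] at this
      exact this.le
  refine ⟨k / 4 * r, by positivity, fun u => ?_⟩
  rcases le_or_gt |u| r with hu | hu
  · refine le_trans ?_ (hloc u hu)
    have h1 : min (u ^ 2) |u| ≤ u ^ 2 := min_le_left _ _
    have h3 : 0 ≤ u ^ 2 := sq_nonneg u
    calc k / 4 * r * min (u ^ 2) |u| ≤ k / 4 * r * u ^ 2 := by gcongr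
      _ ≤ k / 4 * 1 * u ^ 2 := by gcongr
      _ = _ := by ring
  · have hup : 0 < |u| := hr0.trans hu
    have hv := hloc (r / |u| * u) (by
      rw [abs_mul, abs_div, abs_abs, abs_of_pos hr0]
      rw [div_mul_cancel₀ _ hup.ne'])
    have hsq : (r / |u| * u) ^ 2 = r ^ 2 := by
      rw [mul_pow, div_pow, sq_abs]
      have : u ≠ 0 := abs_pos.1 hup
      field_simp
    rw [hsq] at hv
    have hle : r / |u| ≤ 1 := by rw [div_le_one hup]; exact hu.le
    have hc := hconv.2 (Set.mem_univ x0) (Set.mem_univ (x0 + u))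
      (show 0 ≤ 1 - r / |u| by linarith) (show 0 ≤ r / |u| by positivity) (by ring)
    simp only [smul_eq_mul] at hc
    rw [show (1 - r / |u|) * x0 + r / |u| * (x0 + u) = x0 + r / |u| * u by ring] at hc
    have h4 : k / 4 * r ^ 2 ≤ r / |u| * (φ (x0 + u) - φ x0) := by linarith
    rw [div_mul_eq_mul_div r |u|, le_div_iff₀ hup] at h4
    have h5 : k / 4 * r * |u| ≤ φ (x0 + u) - φ x0 := by
      refine le_of_mul_le_mul_left ?_ hr0
      linarith
    refine le_trans ?_ h5
    have := min_le_right (u ^ 2) |u|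
    gcongr

lemma integrable_comp_abs_aux (F : ℝ → ℝ) (hF : IntegrableOn F (Set.Ioi 0)) :
    Integrable (fun y : ℝ => F |y|) := by
  have h1 : IntegrableOn (fun y : ℝ => F |y|) (Set.Ioi 0) := by
    refine hF.congr_fun (fun y hy => ?_) measurableSet_Ioi
    simp only [abs_of_pos (Set.mem_Ioi.1 hy)]
  have h2 : IntegrableOn (fun y : ℝ => F |y|) (Set.Iic 0) := by
    have h3 : IntegrableOn (fun y : ℝ => F |y|) (Set.Ici (-0)) := by
      rw [neg_zero]
      exact Iff.mpr integrableOn_Ici_iff_integrableOn_Ioi h1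
    simpa using h3.comp_neg_Iic
  rw [← integrableOn_univ, ← Set.Iic_union_Ioi (a := (0:ℝ))]
  exact h2.union h1

lemma laplace (φ φ' g : ℝ → ℝ) (x0 k C K : ℝ) (hk : 0 < k) (hd : ∀ x, HasDerivAt φ (φ' x) x)
    (h0 : φ' x0 = 0) (h2 : HasDerivAt φ' k x0) (hm : Monotone φ') (hg : Continuous g)
    (hC : 0 ≤ C) (hK : 0 ≤ K) (hgb : ∀ u, |g (x0 + u)| ≤ C * exp (K * |u|)) :
    Tendsto (fun h : ℝ => ∫ y : ℝ, exp (-(φ (x0 + √h * y) - φ x0) / h) * g (x0 + √h * y))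
      (𝓝[>] 0) (𝓝 (√(2 * π / k) * g x0)) := by
  obtain ⟨δ, hδ, hlb⟩ := lower_bound φ φ' x0 k hk hd h0 h2 hm
  have hφc : Continuous φ := continuous_iff_continuousAt.2 fun x => (hd x).continuousAt
  have hG : √(2 * π / k) * g x0 = ∫ y : ℝ, exp (-(k / 2) * y ^ 2) * g x0 := by
    rw [integral_mul_const, integral_gaussian]
    congr 2
    field_simp
  rw [hG]
  have hs0 : Tendsto (fun h : ℝ => √h) (𝓝[>] 0) (𝓝 0) := by
    have := (Real.continuous_sqrt.tendsto 0)
    rw [Real.sqrt_zero] at this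
    exact this.mono_left nhdsWithin_le_nhds
  refine tendsto_integral_filter_of_dominated_convergence
    (fun y => C * exp δ * exp (-(δ / 2) * |y|)) ?_ ?_ ?_ ?_
  · refine Eventually.of_forall fun h => Continuous.aestronglyMeasurable ?_
    fun_prop
  · have e1 : ∀ᶠ h : ℝ in 𝓝[>] 0, √h < 1 := hs0.eventually (gt_mem_nhds one_pos)
    have e2 : ∀ᶠ h : ℝ in 𝓝[>] 0, K * √h < δ / 2 :=
      (by simpa using hs0.const_mul K : Tendsto _ _ (𝓝 (0:ℝ))).eventually
        (gt_mem_nhds (by positivity))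
    filter_upwards [e1, e2, self_mem_nhdsWithin] with h h1 h2 hpos
    refine Eventually.of_forall fun y => ?_
    have hpos : 0 < h := hpos
    have hsp : 0 < √h := Real.sqrt_pos.2 hpos
    have hss : √h * √h = h := Real.mul_self_sqrt hpos.le
    rw [norm_mul, Real.norm_eq_abs, Real.norm_eq_abs, abs_of_pos (exp_pos _)]
    have hA : δ * (|y| - 1) ≤ (φ (x0 + √h * y) - φ x0) / h := by
      rw [le_div_iff₀ hpos]
      refine le_trans ?_ (hlb (√h * y))
      rw [mul_assoc]
      refine mul_le_mul_of_nonneg_left ?_ hδ.le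
      rw [abs_mul, abs_of_pos hsp, mul_pow, Real.sq_sqrt hpos.le, ← sq_abs y]
      have hy := abs_nonneg y
      refine le_min ?_ ?_
      · nlinarith [sq_nonneg (|y| - 1)]
      · have : h ≤ √h := by nlinarith
        nlinarith
    calc exp (-(φ (x0 + √h * y) - φ x0) / h) * |g (x0 + √h * y)|
        ≤ exp (-(δ * (|y| - 1))) * (C * exp (K * |√h * y|)) := by
          refine mul_le_mul ?_ (hgb _) (abs_nonneg _) (exp_pos _).le
          rw [exp_le_exp, neg_div]
          linarith
      _ = C * exp (-(δ * (|y| - 1)) + K * |√h * y|) := by rw [exp_add]; ring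
      _ ≤ C * exp (δ + -(δ / 2) * |y|) := by
          refine mul_le_mul_of_nonneg_left ?_ hC
          rw [exp_le_exp, abs_mul, abs_of_pos hsp]
          have := mul_le_mul_of_nonneg_right h2.le (abs_nonneg y)
          linarith
      _ = _ := by rw [exp_add]; ring
  · refine Integrable.const_mul ?_ _
    exact integrable_comp_abs_aux (fun y => exp (-(δ / 2) * y))
      (integrableOn_exp_mul_Ioi (by linarith) 0)
  · refine Eventually.of_forall fun y => ?_
    refine Tendsto.mul ?_ ?_
    · rcases eq_or_ne y 0 with rfl | hy
      · simp
      refine (Real.continuous_exp.tendsto _).comp ?_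
      have hl := quad_limit φ φ' x0 k hd h0 h2
      have hq : Tendsto (fun h : ℝ => √h * y) (𝓝[>] 0) (𝓝[≠] 0) := by
        refine tendsto_nhdsWithin_iff.2 ⟨by simpa using hs0.mul_const y, ?_⟩
        filter_upwards [self_mem_nhdsWithin] with h hh
        exact mul_ne_zero (Real.sqrt_pos.2 hh).ne' hy
      have := ((hl.comp hq).mul_const (y ^ 2)).neg
      rw [show -(k / 2) * y ^ 2 = -(k / 2 * y ^ 2) by ring]
      refine this.congr' ?_
      filter_upwards [self_mem_nhdsWithin] with h hh
      have hh : 0 < h := hh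
      simp only [Function.comp]
      rw [mul_pow, Real.sq_sqrt hh.le]
      field_simp
    · have : Tendsto (fun h : ℝ => x0 + √h * y) (𝓝[>] 0) (𝓝 x0) := by
        simpa using (hs0.mul_const y).const_add x0
      exact (hg.tendsto x0).comp this

lemma integral_exp_change (F : ℝ → ℝ) (x0 s : ℝ) (hs : 0 < s) :
    ∫ t in Set.Ioi (0:ℝ), F t
      = s * ∫ y : ℝ, exp (x0 + s * y) * F (exp (x0 + s * y)) := by
  have h1 : ∫ t in Set.Ioi (0:ℝ), F t = ∫ x : ℝ, exp x * F (exp x) := by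
    have := integral_image_eq_integral_abs_deriv_smul (s := Set.univ) (f := exp) (f' := exp)
      MeasurableSet.univ (fun x _ => (Real.hasDerivAt_exp x).hasDerivWithinAt)
      Real.exp_injective.injOn F
    rw [Set.image_univ, Real.range_exp, setIntegral_univ] at this
    rw [this]
    simp [abs_of_pos (exp_pos _)]
  rw [h1, Measure.integral_comp_mul_left (fun z => exp (x0 + z) * F (exp (x0 + z))) s,
    integral_add_left_eq_self (fun z => exp z * F (exp z)) x0, abs_of_pos (inv_pos.2 hs),
    smul_eq_mul, ← mul_assoc, mul_inv_cancel₀ hs.ne', one_mul]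

/-- Laplace method for `∫_0^∞ e^{-f(t)/h} t^{ν-1}(1+t)^{-ν} dt`: as `h → 0⁺`,
the integral equals `√(2πh/f''(t_L)) e^{-f(t_L)/h} t_L^{ν-1}(1+t_L)^{-ν} (1+o(1))`. -/
theorem stmt_9 (B L v0 ν : ℝ) (hB : 0 < B) (hL : 0 < L) (hv0 : v0 < 0)
    (f : ℝ → ℝ)
    (hf : ∀ t, 0 < t → f t = B * L^2 / 4 * (1 + 2*t) + (-v0) / (2*B) * Real.log ((1+t)/t))
    (tL : ℝ)
    (htL : tL = 1/2 * (-1 + Real.sqrt (1 + 4 * (-v0) / (B^2 * L^2))))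
    (f''tL : ℝ)
    (hf''tL : f''tL = B^2 * L^3 / (2 * (-v0)) * Real.sqrt (B^2 * L^2 + 4 * (-v0))) :
    Tendsto (fun h : ℝ =>
        (∫ t in Set.Ioi (0:ℝ), Real.exp (-(f t) / h) * t ^ (ν - 1) * (1 + t) ^ (-ν)) /
        (Real.sqrt (2 * π * h / f''tL) * Real.exp (-(f tL) / h) *
          tL ^ (ν - 1) * (1 + tL) ^ (-ν)))
      (𝓝[>] 0) (𝓝 1) := by
  obtain ⟨w, rfl⟩ : ∃ w, v0 = -w := ⟨-v0, by ring⟩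
  simp only [neg_neg] at *
  have hw : 0 < w := by linarith
  -- facts on the critical point
  have hS : √(1 + 4 * w / (B ^ 2 * L ^ 2)) = 1 + 2 * tL := by rw [htL]; ring
  have hT : 0 < tL := by
    have : 1 < √(1 + 4 * w / (B ^ 2 * L ^ 2)) := by
      rw [Real.lt_sqrt (by norm_num)]
      have : 0 < 4 * w / (B ^ 2 * L ^ 2) := by positivity
      linarith
    linarith
  have hcrit : tL * (1 + tL) * (B ^ 2 * L ^ 2) = w := by
    have := Real.sq_sqrt (show 0 ≤ 1 + 4 * w / (B ^ 2 * L ^ 2) by positivity)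
    rw [hS] at this
    have h3 : tL * (1 + tL) = w / (B ^ 2 * L ^ 2) := by
      linear_combination this / 4
    rw [h3]
    field_simp
  have hS2 : √(B ^ 2 * L ^ 2 + 4 * w) = B * L * (1 + 2 * tL) := by
    rw [Real.sqrt_eq_iff_mul_self_eq_of_pos (by positivity)]
    linear_combination 4 * hcrit
  rw [hS2] at hf''tL
  have hD : 0 < f''tL := by rw [hf''tL]; positivity
  set a := B * L ^ 2 / 4 with ha
  set c := w / (2 * B) with hc
  have hapos : 0 < a := by positivity
  have hcpos : 0 < c := by positivity
  have hac : 2 * a * tL = c / (1 + tL) := by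
    rw [ha, hc, ← hcrit]
    field_simp
    norm_num
  set k := 2 * a * tL + c * tL / (1 + tL) ^ 2 with hkdef
  have hkpos : 0 < k := by positivity
  have hkD : k = tL ^ 2 * f''tL := by
    rw [hkdef, hf''tL, ha, hc, ← hcrit]
    field_simp
    ring
  obtain ⟨x0, hx0⟩ : ∃ x0, exp x0 = tL := ⟨log tL, exp_log hT⟩
  let φ : ℝ → ℝ := fun x => a * (1 + 2 * exp x) + c * log (1 + exp (-x))
  let φ' : ℝ → ℝ := fun x => 2 * a * exp x - c / (1 + exp x)
  let g : ℝ → ℝ := fun x => (1 + exp (-x)) ^ (-ν)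
  have hd : ∀ x, HasDerivAt φ (φ' x) x := by
    intro x
    have h1 := (((Real.hasDerivAt_exp x).const_mul 2).const_add 1).const_mul a
    have h2 := ((((hasDerivAt_neg x).exp).const_add 1).log
      (by positivity : (1 + exp (-x)) ≠ 0)).const_mul c
    refine (h1.add h2).congr_deriv ?_
    simp only [φ']
    rw [exp_neg]
    have := exp_pos x
    field_simp
    ring
  have h0 : φ' x0 = 0 := by simp only [φ', hx0]; linarith
  have h2 : HasDerivAt φ' k x0 := by
    have h1 := (Real.hasDerivAt_exp x0).const_mul (2 * a)
    have h2 := (((Real.hasDerivAt_exp x0).const_add 1).inv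
      (by positivity : (1 + exp x0) ≠ 0)).const_mul c
    refine (h1.sub h2).congr_deriv ?_
    simp only [hx0, hkdef]
    ring
  have hm : Monotone φ' := by
    intro x y hxy
    have := exp_le_exp.2 hxy
    have := exp_pos x
    simp only [φ']
    gcongr
  have hgc : Continuous g := by
    refine Continuous.rpow_const (by fun_prop) fun x => Or.inl ?_
    positivity
  have hgb : ∀ u, |g (x0 + u)| ≤ exp (|ν| * (log 2 + |x0|)) * exp (|ν| * |u|) := by
    intro u
    have hp : 0 < 1 + exp (-(x0 + u)) := by positivity
    simp only [g]
    rw [abs_of_pos (rpow_pos_of_pos hp _), rpow_def_of_pos hp, ← exp_add, exp_le_exp]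
    have l0 : 0 ≤ log (1 + exp (-(x0 + u))) := log_nonneg (by linarith [exp_pos (-(x0 + u))])
    have l1 : log (1 + exp (-(x0 + u))) ≤ log 2 + |x0| + |u| := by
      rw [log_le_iff_le_exp hp, add_assoc, exp_add, exp_log two_pos]
      have e1 : exp (-(x0 + u)) ≤ exp (|x0| + |u|) := by
        rw [exp_le_exp]
        linarith [neg_abs_le x0, neg_abs_le u]
      have e2 : 1 ≤ exp (|x0| + |u|) := one_le_exp (by positivity)
      linarith
    calc log (1 + exp (-(x0 + u))) * -ν ≤ log (1 + exp (-(x0 + u))) * |ν| :=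
          mul_le_mul_of_nonneg_left (neg_le_abs ν) l0
      _ ≤ (log 2 + |x0| + |u|) * |ν| := mul_le_mul_of_nonneg_right l1 (abs_nonneg ν)
      _ = _ := by ring
  have main := laplace φ φ' g x0 k _ _ hkpos hd h0 h2 hm hgc (exp_pos _).le (abs_nonneg ν) hgb
  have hfφ : ∀ x, f (exp x) = φ x := by
    intro x
    rw [hf _ (exp_pos x)]
    simp only [φ]
    rw [add_div, div_self (exp_pos x).ne', exp_neg, one_div, add_comm (exp x)⁻¹]
  have hgg : ∀ x, exp x * (exp x ^ (ν - 1) * (1 + exp x) ^ (-ν)) = g x := by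
    intro x
    have hx := exp_pos x
    simp only [g]
    rw [show 1 + exp (-x) = (1 + exp x) / exp x by rw [exp_neg]; field_simp; ring,
      div_rpow (by positivity) hx.le, rpow_sub_one hx.ne', rpow_neg hx.le ν]
    field_simp
  have hgpos : 0 < g x0 := rpow_pos_of_pos (by positivity) _
  have hfin := main.div_const (√(2 * π / k) * g x0)
  rw [div_self (by positivity)] at hfin
  refine hfin.congr' ?_
  filter_upwards [self_mem_nhdsWithin] with h hh
  have hh : 0 < h := hh
  have hsp : 0 < √h := Real.sqrt_pos.2 hh
  rw [integral_exp_change _ x0 (√h) hsp]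
  have hI : ∀ y, exp (x0 + √h * y) * (exp (-f (exp (x0 + √h * y)) / h) *
      exp (x0 + √h * y) ^ (ν - 1) * (1 + exp (x0 + √h * y)) ^ (-ν))
      = exp (-f tL / h) * (exp (-(φ (x0 + √h * y) - φ x0) / h) * g (x0 + √h * y)) := by
    intro y
    rw [← hgg, ← hx0, hfφ, hfφ, ← mul_assoc (exp (-φ x0 / h)), ← exp_add,
      show -φ x0 / h + -(φ (x0 + √h * y) - φ x0) / h = -φ (x0 + √h * y) / h by ring]
    ring
  simp only [hI]
  rw [integral_const_mul, ← hgg, hx0]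
  have hsq : √(2 * π * h / f''tL) = √h * (√(2 * π / k) * tL) := by
    rw [hkD, show 2 * π * h / f''tL = h * ((2 * π / (tL ^ 2 * f''tL)) * tL ^ 2) by field_simp,
      Real.sqrt_mul hh.le, Real.sqrt_mul (by positivity), Real.sqrt_sq hT.le]
  rw [hsq]
  have : 0 < √(2 * π / k) := by positivity
  have := exp_pos (-f tL / h)
  have : 0 < tL ^ (ν - 1) := by positivity
  have : 0 < (1 + tL) ^ (-ν) := by positivity
  field_simp
end

section
/- Let B > 0, L > 0, v0 < 0, and define g : (0,∞)² → ℝ by g(s,t) = (B·L²/2)·(1 + t + s + 1/(1+t+s)) + ((−v0)/(2B))·(log((1+t)/t) + log((1+s)/s)). Set N = (−v0)/(B²L²) and t⋆ = (1/2)·√N − 1/2 + (1/2)·√(1+N). Then (t⋆, t⋆) is the unique critical point of g on (0,∞)², and it is a global minimum of g on (0,∞)². -/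
open Real

lemma aux_hd (t : ℝ) (ht : 0 < t) :
    HasDerivAt (fun t : ℝ => Real.log ((1+t)/t)) (-(1/(t*(1+t)))) t := by
  have h1 : HasDerivAt (fun t : ℝ => (1+t)/t) ((1*t-(1+t)*1)/t^2) t :=
    ((hasDerivAt_id t).const_add 1).div (hasDerivAt_id t) ht.ne'
  have h2 := h1.log (by positivity)
  convert h2 using 1
  field_simp
  ring

lemma aux_hx (x : ℝ) (hx : 0 < x) :
    HasDerivAt (fun x : ℝ => x + 1/x) (1 - 1/x^2) x := by
  have h1 := (hasDerivAt_id x).add (hasDerivAt_inv hx.ne')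
  have e : (fun x : ℝ => x + 1/x) = id + fun y : ℝ => y⁻¹ := by
    funext y
    rw [Pi.add_apply, one_div, id]
  have e2 : 1 - 1/x^2 = 1 + -(x^2)⁻¹ := by rw [one_div, sub_eq_add_neg]
  rw [e, e2]
  exact h1

lemma aux_log (a t : ℝ) (ha : 0 < a) (ht : 0 < t) :
    Real.log ((1+a)/a) - (t-a)/(a*(1+a)) ≤ Real.log ((1+t)/t) := by
  have h := Real.one_sub_inv_le_log_of_pos (x := ((1+t)/t)/((1+a)/a)) (by positivity)
  rw [Real.log_div (by positivity) (by positivity)] at h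
  have h2 : 1 - (((1+t)/t)/((1+a)/a))⁻¹ - (-((t-a)/(a*(1+a)))) = (t-a)^2/(a*(1+a)*(1+t)) := by
    field_simp
    ring
  have h3 : 0 ≤ (t-a)^2/(a*(1+a)*(1+t)) := by positivity
  linarith

lemma aux_x (w x : ℝ) (hw : 0 < w) (hx : 0 < x) :
    w + 1/w + (1-1/w^2)*(x-w) ≤ x + 1/x := by
  have h2 : x + 1/x - (w + 1/w + (1-1/w^2)*(x-w)) = (x-w)^2/(x*w^2) := by
    field_simp
    ring
  have h3 : 0 ≤ (x-w)^2/(x*w^2) := by positivity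
  linarith

lemma aux_fd (A C : ℝ) (G : ℝ × ℝ → ℝ)
    (hG : ∀ s t : ℝ, G (s, t) = A * (1 + t + s + 1/(1 + t + s))
        + C * (Real.log ((1+t)/t) + Real.log ((1+s)/s)))
    (p : ℝ × ℝ) (h1 : 0 < p.1) (h2 : 0 < p.2) :
    HasFDerivAt G
      (A • ((1 - 1/(1+p.2+p.1)^2) • (ContinuousLinearMap.snd ℝ ℝ ℝ + ContinuousLinearMap.fst ℝ ℝ ℝ))
      + C • ((-(1/(p.2*(1+p.2)))) • ContinuousLinearMap.snd ℝ ℝ ℝ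
        + (-(1/(p.1*(1+p.1)))) • ContinuousLinearMap.fst ℝ ℝ ℝ)) p := by
  have e : G = fun p : ℝ × ℝ => A * (1 + p.2 + p.1 + 1/(1 + p.2 + p.1))
        + C * (Real.log ((1+p.2)/p.2) + Real.log ((1+p.1)/p.1)) := by
    ext ⟨s, t⟩; exact hG s t
  rw [e]
  have f1 : HasFDerivAt (fun p : ℝ × ℝ => p.1) (ContinuousLinearMap.fst ℝ ℝ ℝ) p := hasFDerivAt_fst
  have f2 : HasFDerivAt (fun p : ℝ × ℝ => p.2) (ContinuousLinearMap.snd ℝ ℝ ℝ) p := hasFDerivAt_snd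
  have k1 := (aux_hd p.1 h1).comp_hasFDerivAt p f1
  have k2 := (aux_hd p.2 h2).comp_hasFDerivAt p f2
  have k3 := (aux_hx (1+p.2+p.1) (by positivity)).comp_hasFDerivAt p ((f2.const_add 1).add f1)
  exact (k3.const_mul A).add ((k2.add k1).const_mul C)

/-- `(t⋆, t⋆)` is the unique critical point of
`g(s,t) = (BL²/2)(1+t+s+1/(1+t+s)) + ((-v0)/(2B))(log((1+t)/t) + log((1+s)/s))`
on `(0,∞)²`, and it is a global minimum there. -/
theorem stmt_12 (B L v0 : ℝ) (hB : 0 < B) (hL : 0 < L) (hv0 : v0 < 0)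
    (G : ℝ × ℝ → ℝ)
    (hG : ∀ s t : ℝ, G (s, t) = B * L^2 / 2 * (1 + t + s + 1/(1 + t + s))
        + (-v0) / (2*B) * (Real.log ((1+t)/t) + Real.log ((1+s)/s)))
    (N tstar : ℝ) (hN : N = (-v0) / (B^2 * L^2))
    (htstar : tstar = 1/2 * Real.sqrt N - 1/2 + 1/2 * Real.sqrt (1 + N)) :
    (∀ p : ℝ × ℝ, 0 < p.1 → 0 < p.2 →
        (HasFDerivAt G (0 : ℝ × ℝ →L[ℝ] ℝ) p ↔ p = (tstar, tstar)))
    ∧ (∀ s t : ℝ, 0 < s → 0 < t → G (tstar, tstar) ≤ G (s, t)) := by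
  have hNpos : 0 < N := by rw [hN]; have := neg_pos.2 hv0; positivity
  have hC : (-v0) / (2*B) = B * L^2 / 2 * N := by rw [hN]; field_simp
  rw [hC] at hG
  have hA : 0 < B * L^2 / 2 := by positivity
  generalize B * L^2 / 2 = A at hG hA
  obtain ⟨q, hq⟩ : ∃ q, q = Real.sqrt N := ⟨_, rfl⟩
  obtain ⟨r, hr⟩ : ∃ r, r = Real.sqrt (1 + N) := ⟨_, rfl⟩
  have hq0 : 0 < q := by rw [hq]; exact Real.sqrt_pos.2 hNpos
  have hqq : q^2 = N := by rw [hq]; exact Real.sq_sqrt hNpos.le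
  have hrr : r^2 = 1 + N := by rw [hr]; exact Real.sq_sqrt (by linarith)
  have hr0 : 0 ≤ r := by rw [hr]; exact Real.sqrt_nonneg _
  have hr1 : 1 < r := by nlinarith
  rw [← hq, ← hr] at htstar
  have ht0 : 0 < tstar := by rw [htstar]; linarith
  have hw : 1 + 2*tstar = q + r := by rw [htstar]; ring
  have hcrit : 1 - 1/(1+tstar+tstar)^2 = N * (1/(tstar*(1+tstar))) := by
    have e1 : 1 + tstar + tstar = q + r := by linarith
    have e2 : tstar*(1+tstar) = q*(q+r)/2 := by
      rw [htstar]; nlinarith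
    have hqr : 0 < q + r := by linarith
    rw [e1, e2, ← hqq]
    field_simp
    nlinarith
  constructor
  · intro p h1 h2
    have hd := aux_fd A (A*N) G hG p h1 h2
    constructor
    · intro h
      have hu := hd.unique h
      have u1 := congrArg (fun f : ℝ × ℝ →L[ℝ] ℝ => f (1, 0)) hu
      have u2 := congrArg (fun f : ℝ × ℝ →L[ℝ] ℝ => f (0, 1)) hu
      obtain ⟨s, t⟩ := p
      simp only [ContinuousLinearMap.add_apply, ContinuousLinearMap.smul_apply,
        ContinuousLinearMap.coe_fst', ContinuousLinearMap.coe_snd',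
        ContinuousLinearMap.zero_apply, smul_eq_mul] at u1 u2 h1 h2
      have v1 : 1 - 1/(1+t+s)^2 = N * (1/(s*(1+s))) := by
        apply mul_left_cancel₀ hA.ne'; linarith
      have v2 : 1 - 1/(1+t+s)^2 = N * (1/(t*(1+t))) := by
        apply mul_left_cancel₀ hA.ne'; linarith
      have v3 : 1/(s*(1+s)) = 1/(t*(1+t)) :=
        mul_left_cancel₀ hNpos.ne' (v1.symm.trans v2)
      have v4 : s*(1+s) = t*(1+t) := by
        rw [one_div, one_div] at v3; exact inv_injective v3
      have v5 : s = t := by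
        have : (s-t)*(1+s+t) = 0 := by linarith
        rcases mul_eq_zero.1 this with h | h <;> linarith
      subst v5
      have v6 : 4*(s*(1+s))^2 = N*(1+2*s)^2 := by
        have : (1+s+s) ≠ 0 := by positivity
        field_simp at v1
        linear_combination v1
      have v7 : 2*(s*(1+s)) = q*(1+2*s) := by
        have : (2*(s*(1+s)))^2 = (q*(1+2*s))^2 := by rw [mul_pow q, hqq]; linarith
        exact (pow_left_inj₀ (by positivity) (by positivity) two_ne_zero).1 this
      have v8 : 1 + 2*s - q = r := by
        have e : (1+2*s-q)^2 = r^2 := by rw [hrr, ← hqq]; linear_combination 2*v7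
        rcases sq_eq_sq_iff_eq_or_eq_neg.1 e with h | h
        · exact h
        · nlinarith
      have : s = tstar := by linarith
      rw [this]
    · rintro rfl
      convert hd using 1
      ext <;> simp only [ContinuousLinearMap.add_apply, ContinuousLinearMap.smul_apply,
        ContinuousLinearMap.coe_fst', ContinuousLinearMap.coe_snd',
        ContinuousLinearMap.zero_apply, smul_eq_mul, ContinuousLinearMap.comp_apply,
        ContinuousLinearMap.inl_apply, ContinuousLinearMap.inr_apply] <;>
        rw [hcrit] <;> ring
  · intro s t hs ht
    rw [hG, hG]
    have k1 := aux_log tstar s ht0 hs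
    have k2 := aux_log tstar t ht0 ht
    have k3 := aux_x (1+tstar+tstar) (1+t+s) (by positivity) (by positivity)
    rw [hcrit] at k3
    have k4 := mul_le_mul_of_nonneg_left (add_le_add k1 k2) hNpos.le
    have k5 := mul_le_mul_of_nonneg_left (add_le_add k3 k4) hA.le
    refine le_trans (le_of_eq ?_) (k5.trans (le_of_eq ?_)) <;> ring
end

section
/- Let B > 0, L > 0, v0 < 0, N = (−v0)/(B²L²), and t⋆ = (1/2)·√N − 1/2 + (1/2)·√(1+N). Then g(t⋆, t⋆) = B·L²·(√(1+N) + N·log((1 + √(1+N))/√N)) = ∫_0^{2L} √(B²r²/4 + (−v0)) dr, where g(s,t) = (B·L²/2)·(1 + t + s + 1/(1+t+s)) + ((−v0)/(2B))·(log((1+t)/t) + log((1+s)/s)). -/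
open MeasureTheory Real

/-- the value of `g` at its minimum:
`g(t⋆,t⋆) = BL²(√(1+N) + N log((1+√(1+N))/√N)) = ∫_0^{2L} √(B²r²/4 + (-v0)) dr`. -/
theorem stmt_13 (B L v0 : ℝ) (hB : 0 < B) (hL : 0 < L) (hv0 : v0 < 0)
    (g : ℝ → ℝ → ℝ)
    (hg : ∀ s t : ℝ, g s t = B * L^2 / 2 * (1 + t + s + 1/(1 + t + s))
        + (-v0) / (2*B) * (Real.log ((1+t)/t) + Real.log ((1+s)/s)))
    (N tstar : ℝ) (hN : N = (-v0) / (B^2 * L^2))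
    (htstar : tstar = 1/2 * Real.sqrt N - 1/2 + 1/2 * Real.sqrt (1 + N)) :
    g tstar tstar
      = B * L^2 * (Real.sqrt (1 + N) + N * Real.log ((1 + Real.sqrt (1 + N)) / Real.sqrt N))
    ∧ g tstar tstar = ∫ r in (0:ℝ)..(2*L), Real.sqrt (B^2 * r^2 / 4 + (-v0)) := by
  have hNpos : 0 < N := by
    rw [hN]; have : 0 < -v0 := by linarith
    positivity
  have hv : -v0 = B^2 * L^2 * N := by rw [hN]; field_simp
  obtain ⟨a, ha⟩ : ∃ a, a = Real.sqrt N := ⟨_, rfl⟩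
  obtain ⟨b, hb⟩ : ∃ b, b = Real.sqrt (1 + N) := ⟨_, rfl⟩
  have ha0 : 0 < a := by rw [ha]; exact Real.sqrt_pos.2 hNpos
  have hb1 : 1 < b := by
    rw [hb, Real.lt_sqrt (by norm_num)]; linarith
  have ha2 : a^2 = N := by rw [ha]; exact Real.sq_sqrt hNpos.le
  have hb2 : b^2 = 1 + N := by rw [hb]; exact Real.sq_sqrt (by linarith)
  rw [← ha, ← hb] at htstar
  rw [← ha, ← hb]
  have ht0 : 0 < tstar := by rw [htstar]; linarith
  have h1 : g tstar tstar = B * L^2 * (b + N * Real.log ((1 + b) / a)) := by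
    rw [hg]
    have e1 : (1 + tstar) / tstar = (1 + b) / a := by
      rw [div_eq_div_iff ht0.ne' ha0.ne', htstar]
      nlinarith
    have e2 : 1 / (1 + tstar + tstar) = b - a := by
      rw [div_eq_iff (by positivity), htstar]
      nlinarith
    rw [e1, e2, hv, htstar]
    field_simp
    ring
  refine ⟨h1, ?_⟩
  rw [h1]
  have hpos : ∀ r : ℝ, 0 < B^2 * r^2 / 4 + (-v0) := by
    intro r
    have : 0 ≤ B^2 * r^2 / 4 := by positivity
    linarith
  have hder : ∀ r ∈ Set.uIcc (0:ℝ) (2*L), HasDerivAt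
      (fun r : ℝ => r * Real.sqrt (B^2 * r^2 / 4 + (-v0)) / 2
        + (-v0) / B * Real.log (B * r / 2 + Real.sqrt (B^2 * r^2 / 4 + (-v0))))
      (Real.sqrt (B^2 * r^2 / 4 + (-v0))) r := by
    intro r hr
    rw [Set.uIcc_of_le (by linarith)] at hr
    have hr0 := hr.1
    have hS := Real.sqrt_pos.2 (hpos r)
    have hS2 := Real.sq_sqrt (hpos r).le
    have d0 : HasDerivAt (fun r : ℝ => B^2 * r^2 / 4 + (-v0)) (B^2 * r / 2) r := by
      have := ((((hasDerivAt_id r).pow 2).const_mul (B^2)).div_const 4).add_const (-v0)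
      refine HasDerivAt.congr_deriv this ?_
      simp; ring
    have d1 := d0.sqrt (hpos r).ne'
    have d2 : HasDerivAt (fun r : ℝ => B * r / 2) (B / 2) r := by
      have := ((hasDerivAt_id r).const_mul B).div_const 2
      refine HasDerivAt.congr_deriv this ?_
      simp
    have hp : 0 < B * r / 2 + Real.sqrt (B^2 * r^2 / 4 + (-v0)) := by positivity
    have d3 := ((d2.add d1).log hp.ne').const_mul ((-v0) / B)
    have d4 := (((hasDerivAt_id r).mul d1).div_const 2).add d3
    refine HasDerivAt.congr_deriv d4 ?_
    simp only [id, Pi.add_apply]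
    generalize Real.sqrt (B^2 * r^2 / 4 + (-v0)) = S at *
    have hc : -v0 = S^2 - B^2 * r^2 / 4 := by linarith
    rw [hc]
    field_simp
    ring
  rw [intervalIntegral.integral_eq_sub_of_hasDerivAt hder
    ((Continuous.intervalIntegrable (by fun_prop)) _ _)]
  have s1 : Real.sqrt (B^2 * (2*L)^2 / 4 + (-v0)) = B * L * b := by
    rw [Real.sqrt_eq_iff_mul_self_eq (hpos _).le (by positivity), hv]
    linear_combination (-1) * B^2 * L^2 * hb2
  have s0 : Real.sqrt (B^2 * 0^2 / 4 + (-v0)) = B * L * a := by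
    rw [Real.sqrt_eq_iff_mul_self_eq (hpos _).le (by positivity), hv]
    linear_combination (-1) * B^2 * L^2 * ha2
  simp only [s1, s0]
  have l1 : B * (2 * L) / 2 + B * L * b = (B * L) * (1 + b) := by ring
  have l0 : B * 0 / 2 + B * L * a = (B * L) * a := by ring
  rw [l1, l0, Real.log_mul (mul_pos hB hL).ne' (by positivity : 1 + b ≠ 0),
    Real.log_mul (mul_pos hB hL).ne' ha0.ne',
    Real.log_div (by positivity) (by positivity), hv]
  field_simp
  ring
end

section
/- Let B > 0, h > 0 and μ ∈ ℝ, and set α = 1/2 − μ/(2Bh); assume α > 0. Define u : (0,∞) → ℝ by u(r) = exp(−B r²/(4h)) · ∫_0^∞ exp(−B r² t/(2h)) · t^{α−1} (1+t)^{−α} dt. Then u is twice differentiable on (0,∞) and satisfies the radial Schrödinger equation −h²·(u''(r) + u'(r)/r) + (B²r²/4)·u(r) = μ·u(r) for every r > 0. -/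
open MeasureTheory Real

noncomputable def GG (a s z : ℝ) : ℝ :=
  ∫ t in Set.Ioi (0:ℝ), Real.exp (-z * t) * t ^ (s - 1) * (1+t) ^ (-a)

lemma GG_meas (a s z : ℝ) : AEStronglyMeasurable
    (fun t : ℝ => Real.exp (-z * t) * t ^ (s - 1) * (1+t) ^ (-a))
    (volume.restrict (Set.Ioi (0:ℝ))) := by
  apply Measurable.aestronglyMeasurable
  fun_prop

lemma GG_bound (a s z t : ℝ) (ha : 0 < a) (ht : 0 < t) :
    ‖Real.exp (-z * t) * t ^ (s - 1) * (1+t) ^ (-a)‖ ≤ t ^ (s-1) * Real.exp (-z * t) := by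
  have h1 : (1+t) ^ (-a) ≤ 1 := Real.rpow_le_one_of_one_le_of_nonpos (by linarith) (by linarith)
  have h2 : 0 ≤ (1+t) ^ (-a) := Real.rpow_nonneg (by linarith) _
  have h3 : 0 ≤ t ^ (s-1) := Real.rpow_nonneg ht.le _
  rw [Real.norm_of_nonneg (by positivity)]
  have : 0 ≤ t ^ (s-1) * Real.exp (-z * t) := by positivity
  nlinarith

lemma base_int (s z : ℝ) (hs : 0 < s) (hz : 0 < z) :
    Integrable (fun t : ℝ => t ^ (s-1) * Real.exp (-z * t))
      (volume.restrict (Set.Ioi (0:ℝ))) := by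
  have := integrableOn_rpow_mul_exp_neg_mul_rpow (p := 1) (s := s-1) (b := z)
    (by linarith) one_pos hz
  simp only [Real.rpow_one] at this
  exact this

lemma GG_int (a s z : ℝ) (ha : 0 < a) (hs : 0 < s) (hz : 0 < z) :
    Integrable (fun t : ℝ => Real.exp (-z * t) * t ^ (s - 1) * (1+t) ^ (-a))
      (volume.restrict (Set.Ioi (0:ℝ))) := by
  refine (base_int s z hs hz).mono' (GG_meas a s z) ?_
  filter_upwards [ae_restrict_mem measurableSet_Ioi] with t ht
  exact GG_bound a s z t ha ht

lemma GG_deriv (a s z : ℝ) (ha : 0 < a) (hs : 0 < s) (hz : 0 < z) :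
    HasDerivAt (GG a s) (-GG a (s+1) z) z := by
  have key := hasDerivAt_integral_of_dominated_loc_of_deriv_le
    (μ := volume.restrict (Set.Ioi (0:ℝ)))
    (F := fun z t => Real.exp (-z * t) * t ^ (s - 1) * (1+t) ^ (-a))
    (F' := fun z t => -(Real.exp (-z * t) * t ^ (s + 1 - 1) * (1+t) ^ (-a)))
    (bound := fun t => t ^ (s+1-1) * Real.exp (-(z/2) * t))
    (x₀ := z) (s := Set.Ioi (z/2)) (Ioi_mem_nhds (by linarith))
    (Filter.Eventually.of_forall fun x => GG_meas a s x) (GG_int a s z ha hs hz)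
    (GG_meas a (s+1) z).neg ?_ (base_int (s+1) (z/2) (by linarith) (by linarith)) ?_
  · have := key.2
    rw [integral_neg] at this
    exact this
  · filter_upwards [ae_restrict_mem measurableSet_Ioi] with t ht x hx
    have ht : 0 < t := ht
    have hx : z/2 < x := hx
    rw [norm_neg]
    refine (GG_bound a (s+1) x t ha ht).trans ?_
    gcongr
  · filter_upwards [ae_restrict_mem measurableSet_Ioi] with t ht x hx
    have ht : 0 < t := ht
    have h1 : HasDerivAt (fun x : ℝ => -x * t) (-1 * t) x := (hasDerivAt_id x).neg.mul_const t
    have h2 := (h1.exp.mul_const (t ^ (s-1))).mul_const ((1+t) ^ (-a))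
    refine h2.congr_deriv ?_
    rw [show s + 1 - 1 = (s - 1) + 1 by ring, Real.rpow_add_one ht.ne']
    ring

lemma GG_rel (a z : ℝ) (ha : 0 < a) (hz : 0 < z) :
    z * GG a (a+1+1) z = (1 - z) * GG a (a+1) z + a * GG a a z := by
  have i0 := GG_int a a z ha ha hz
  have i1 := GG_int a (a+1) z ha (by linarith) hz
  have i2 := GG_int a (a+1+1) z ha (by linarith) hz
  have key := integral_Ioi_of_hasDerivAt_of_tendsto (a := (0:ℝ)) (m := 0)
    (f := fun t : ℝ => Real.exp (-z * t) * t ^ a * (1+t) ^ (1-a))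
    (f' := fun t : ℝ => (1-z) * (Real.exp (-z * t) * t ^ (a+1 - 1) * (1+t) ^ (-a))
      + a * (Real.exp (-z * t) * t ^ (a - 1) * (1+t) ^ (-a))
      - z * (Real.exp (-z * t) * t ^ (a+1+1 - 1) * (1+t) ^ (-a))) ?_ ?_
      (((i1.const_mul _).add (i0.const_mul _)).sub (i2.const_mul _)) ?_
  · have e : (1-z) * GG a (a+1) z + a * GG a a z - z * GG a (a+1+1) z = 0 := by
      unfold GG
      rw [← integral_const_mul, ← integral_const_mul, ← integral_const_mul,
        ← integral_add (i1.const_mul _) (i0.const_mul _),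
        ← integral_sub (f := fun t : ℝ => (1-z) * (Real.exp (-z * t) * t ^ (a+1 - 1) * (1+t) ^ (-a))
      + a * (Real.exp (-z * t) * t ^ (a - 1) * (1+t) ^ (-a)))
          ((i1.const_mul _).add (i0.const_mul _)) (i2.const_mul _)]
      rw [key]
      simp [Real.zero_rpow ha.ne']
    linarith
  · apply ContinuousAt.continuousWithinAt
    have h1 : ContinuousAt (fun t : ℝ => t ^ a) 0 :=
      Real.continuousAt_rpow_const _ _ (Or.inr ha.le)
    have h2 : ContinuousAt (fun t : ℝ => (1+t) ^ (1-a)) 0 :=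
      ContinuousAt.rpow_const (by fun_prop) (Or.inl (by norm_num))
    have h3 : ContinuousAt (fun t : ℝ => Real.exp (-z * t)) 0 := by fun_prop
    exact (h3.mul h1).mul h2
  · intro t ht
    have ht : 0 < t := ht
    have h1 : HasDerivAt (fun t : ℝ => -z * t) (-z * 1) t := (hasDerivAt_id t).const_mul (-z)
    have h2 : HasDerivAt (fun t : ℝ => t ^ a) (a * t ^ (a-1)) t :=
      Real.hasDerivAt_rpow_const (Or.inl ht.ne')
    have h3 : HasDerivAt (fun t : ℝ => (1+t) ^ (1-a)) (1 * (1-a) * (1+t) ^ (1-a-1)) t :=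
      ((hasDerivAt_id t).const_add 1).rpow_const (Or.inl (by simp; linarith))
    refine ((h1.exp.mul h2).mul h3).congr_deriv ?_
    have e1 : t ^ a = t ^ (a-1) * t := by
      rw [← Real.rpow_add_one ht.ne']; congr 1; ring
    have e2 : (1+t) ^ (1-a) = (1+t) ^ (-a) * (1+t) := by
      rw [← Real.rpow_add_one (by linarith)]; congr 1; ring
    rw [show a + 1 - 1 = a by ring, show a + 1 + 1 - 1 = a + 1 by ring,
      Real.rpow_add_one ht.ne', show 1 - a - 1 = -a by ring, e2]
    simp only [Pi.mul_apply, e1]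
    ring
  · have l1 := tendsto_rpow_mul_exp_neg_mul_atTop_nhds_zero a z hz
    have l2 := tendsto_rpow_mul_exp_neg_mul_atTop_nhds_zero (a+1) z hz
    have l := l1.add l2
    rw [add_zero] at l
    refine squeeze_zero' ?_ ?_ l
    · filter_upwards [Filter.eventually_gt_atTop 0] with t ht
      positivity
    · filter_upwards [Filter.eventually_gt_atTop 0] with t ht
      have h1 : (1+t) ^ (1-a) ≤ 1 + t := by
        calc (1+t) ^ (1-a) ≤ (1+t) ^ (1:ℝ) :=
              Real.rpow_le_rpow_of_exponent_le (by linarith) (by linarith)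
          _ = 1 + t := Real.rpow_one _
      rw [Real.rpow_add_one ht.ne']
      have : 0 ≤ Real.exp (-z * t) * t ^ a := by positivity
      nlinarith

theorem stmt_15 (B h μ α : ℝ) (hB : 0 < B) (hh : 0 < h)
    (hα : α = 1/2 - μ / (2*B*h)) (hαpos : 0 < α)
    (u : ℝ → ℝ)
    (hu : ∀ r : ℝ, 0 < r → u r = Real.exp (-B * r^2 / (4*h)) *
        ∫ t in Set.Ioi (0:ℝ), Real.exp (-B * r^2 * t / (2*h)) * t ^ (α - 1) * (1+t) ^ (-α)) :
    (∀ r ∈ Set.Ioi (0:ℝ), DifferentiableAt ℝ u r)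
    ∧ (∀ r ∈ Set.Ioi (0:ℝ), DifferentiableAt ℝ (deriv u) r)
    ∧ (∀ r : ℝ, 0 < r →
        -h^2 * (deriv (deriv u) r + deriv u r / r) + B^2 * r^2 / 4 * u r = μ * u r) := by
  obtain ⟨c, hc⟩ : ∃ c, c = B / h := ⟨_, rfl⟩
  have hcpos : 0 < c := hc ▸ div_pos hB hh
  have hBc : B = c * h := by rw [hc]; field_simp
  have hu' : ∀ r : ℝ, 0 < r → u r = Real.exp (-(c * r^2 / 4)) * GG α α (c * r^2 / 2) := by
    intro r hr
    rw [hu r hr, GG, hBc]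
    congr 2
    · field_simp
    · ext t
      congr 3
      field_simp
  have dz : ∀ r : ℝ, HasDerivAt (fun r : ℝ => c * r^2 / 2) (c * r) r := by
    intro r
    refine (((hasDerivAt_pow 2 r).const_mul c).div_const 2).congr_deriv ?_
    simp; ring
  have de : ∀ r : ℝ, HasDerivAt (fun r : ℝ => Real.exp (-(c * r^2 / 4)))
      (Real.exp (-(c * r^2 / 4)) * (-(c * r / 2))) r := by
    intro r
    refine HasDerivAt.exp ?_
    refine ((((hasDerivAt_pow 2 r).const_mul c).div_const 4).neg).congr_deriv ?_
    simp; ring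
  have dG : ∀ s r : ℝ, 0 < s → 0 < r → HasDerivAt (fun r : ℝ => GG α s (c * r^2 / 2))
      (-GG α (s+1) (c * r^2 / 2) * (c * r)) r := by
    intro s r hs hr
    exact (GG_deriv α s _ hαpos hs (by positivity)).comp r (dz r)
  have d1 : ∀ r : ℝ, 0 < r → HasDerivAt u (Real.exp (-(c * r^2 / 4)) *
      (-(c * r) * (GG α α (c * r^2 / 2) / 2 + GG α (α+1) (c * r^2 / 2)))) r := by
    intro r hr
    have := (de r).mul (dG α r hαpos hr)
    refine HasDerivAt.congr_of_eventuallyEq (f := fun r => Real.exp (-(c * r^2 / 4)) * GG α α (c * r^2 / 2)) ?_ ?_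
    · refine this.congr_deriv ?_
      ring
    · filter_upwards [Ioi_mem_nhds hr] with x hx using hu' x hx
  have d2 : ∀ r : ℝ, 0 < r → HasDerivAt (deriv u)
      (Real.exp (-(c * r^2 / 4)) * (-(c * r / 2)) *
        (-(c * r) * (GG α α (c * r^2 / 2) / 2 + GG α (α+1) (c * r^2 / 2)))
      + Real.exp (-(c * r^2 / 4)) * (-(c * 1) * (GG α α (c * r^2 / 2) / 2
          + GG α (α+1) (c * r^2 / 2))
        + -(c * r) * (-GG α (α+1) (c * r^2 / 2) * (c * r) / 2
          + -GG α (α+1+1) (c * r^2 / 2) * (c * r)))) r := by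
    intro r hr
    have := (de r).mul ((((hasDerivAt_id r).const_mul c).neg).mul
      (((dG α r hαpos hr).div_const 2).add (dG (α+1) r (by linarith) hr)))
    refine HasDerivAt.congr_of_eventuallyEq this ?_
    filter_upwards [Ioi_mem_nhds hr] with x hx using (d1 x hx).deriv
  refine ⟨fun r hr => (d1 r hr).differentiableAt, fun r hr => (d2 r hr).differentiableAt, ?_⟩
  intro r hr
  have hμ : μ = c * h^2 * (1 - 2 * α) := by
    rw [hα, hBc]; field_simp; ring
  have rel := GG_rel α (c * r^2 / 2) hαpos (by positivity)
  rw [(d2 r hr).deriv, (d1 r hr).deriv, hu' r hr, hμ, hBc]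
  field_simp
  linear_combination (-32 : ℝ) * rel
end
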